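/- Let 𝓐_∀ be an NFH_∀ over Σ with k variables, and let 𝓐′_∀ be a sequence-complete NFH_∀ over Σ with the same k variables such that for every legal word w over (Σ ∪ {#})ᵏ, the underlying NFA Â′_∀ accepts w if and only if Â_∀ accepts every sequence of w. Then 𝓛(𝓐_∀) = 𝓛(𝓐′_∀). -/

import Mathlib

/-- The length of the longest word in a `k`-tuple of words. -/
def maxLen {α : Type} {k : ℕ} (v : Fin k → List α) : ℕ :=
  Finset.univ.sup fun i => (v i).length

/-- `zip` of a `k`-tuple of words over `α`: the word over `k`-tuples of
`Option α`, where `none` plays the role of the padding symbol `#`. Its length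
is the length of the longest word, and its `j`-th letter has `i`-th component
the `j`-th letter of the `i`-th word (or `#` = `none` if that word has ended). -/
def zipWord {α : Type} {k : ℕ} (v : Fin k → List α) : List (Fin k → Option α) :=
  (List.range (maxLen v)).map fun j i => (v i)[j]?

/-- A nondeterministic finite hyperautomaton (NFH) with `k` word variables:
an NFA over the alphabet of `k`-tuples `(Σ ∪ {#})ᵏ` together with a
quantification condition, where the `i`-th quantifier binds the `i`-th
variable (`true` = ∃, `false` = ∀). -/
structure NFH (α σ : Type) (k : ℕ) where
  quant : Fin k → Bool
  aut : NFA (Fin k → Option α) σ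

/-- Satisfaction of the suffix `𝔔ᵢ₊₁xᵢ₊₁ ⋯ 𝔔ₖxₖ` of the quantification
condition by a hyperword `S`, given a partial assignment `v` to the first `i`
variables: when all variables are assigned, the underlying NFA must accept the
zip of the assignment. -/
def NFH.SatFrom {α σ : Type} {k : ℕ} (A : NFH α σ k) (S : Set (List α)) :
    ℕ → (Fin k → List α) → Prop
  | i, v =>
    if h : i < k then
      if A.quant ⟨i, h⟩ then
        ∃ w ∈ S, A.SatFrom S (i + 1) (Function.update v ⟨i, h⟩ w)
      else
        ∀ w ∈ S, A.SatFrom S (i + 1) (Function.update v ⟨i, h⟩ w)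
    else
      zipWord v ∈ A.aut.accepts
  termination_by i _ => k - i
  decreasing_by all_goals omega

/-- A hyperword `S` is accepted by the NFH `A` if it satisfies the full
quantification condition of `A`. -/
def NFH.Accepts {α σ : Type} {k : ℕ} (A : NFH α σ k) (S : Set (List α)) : Prop :=
  A.SatFrom S 0 fun _ => []

/-- The hyperlanguage of an NFH: the set of all nonempty hyperwords it accepts. -/
def NFH.hyperLang {α σ : Type} {k : ℕ} (A : NFH α σ k) : Set (Set (List α)) :=
  { S | S.Nonempty ∧ A.Accepts S }

/-- An NFH (with all quantifiers ∀) is sequence-complete if for every legal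
word `zip(w₁, …, wₖ)`, its underlying NFA accepts it iff it accepts every
sequence `zip(w_{ζ(1)}, …, w_{ζ(k)})` of it. -/
def SeqComplete {α σ : Type} {k : ℕ} (A : NFH α σ k) : Prop :=
  ∀ v : Fin k → List α,
    zipWord v ∈ A.aut.accepts ↔
      ∀ ζ : Fin k → Fin k, zipWord (v ∘ ζ) ∈ A.aut.accepts

/-- An NFH (with all quantifiers ∃) is permutation-complete if for every legal
word `zip(w₁, …, wₖ)`, its underlying NFA accepts it iff it accepts every
permutation `zip(w_{ζ(1)}, …, w_{ζ(k)})` of it. -/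
def PermComplete {α σ : Type} {k : ℕ} (A : NFH α σ k) : Prop :=
  ∀ v : Fin k → List α,
    zipWord v ∈ A.aut.accepts ↔
      ∀ ζ : Equiv.Perm (Fin k), zipWord (v ∘ ζ) ∈ A.aut.accepts

/-! A hyperword `S` satisfies an all-universal condition exactly when the automaton accepts the
zip of every tuple of words of `S`. The tuples over `S` are closed under `v ↦ v ∘ ζ`, and `ζ = id`
returns `v` itself, so asking acceptance of all tuples over `S` is the same as asking acceptance of
all their sequences. -/

section Completions

variable {β : Type*} {k : ℕ} {S : Set β} {i : ℕ} {u v : Fin k → β}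

/-- The completions in `S` of a partial assignment to the first `i` coordinates. The assignment is
encoded by a total tuple `v` whose entries from `i` on are ignored, as in `NFH.SatFrom`. -/
def completions (S : Set β) (i : ℕ) (v : Fin k → β) : Set (Fin k → β) :=
  {u | (∀ j : Fin k, j < i → u j = v j) ∧ ∀ j : Fin k, i ≤ j → u j ∈ S}

theorem mem_completions_zero : u ∈ completions S 0 v ↔ ∀ j, u j ∈ S := by
  simp [completions]

theorem completions_of_le (hki : k ≤ i) : completions S i v = {v} := by
  ext u
  constructor
  · rintro ⟨hagree, -⟩
    exact funext fun j => hagree j (j.isLt.trans_le hki)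
  · rintro rfl
    exact ⟨fun _ _ => rfl, fun j hij => absurd (hki.trans hij) j.isLt.not_ge⟩

theorem mem_completions_succ_update (i : Fin k) {w : β} :
    u ∈ completions S (i + 1) (Function.update v i w) ↔
      u i = w ∧ (∀ j < i, u j = v j) ∧ ∀ j > i, u j ∈ S := by
  constructor
  · rintro ⟨hagree, hmem⟩
    refine ⟨by simpa using hagree i i.val.lt_succ_self, fun j hj => ?_, fun j hj => hmem j hj⟩
    simpa [hj.ne] using hagree j (Nat.lt_succ_of_lt hj)
  · rintro ⟨rfl, hagree, hmem⟩
    refine ⟨fun j hj => ?_, fun j hj => hmem j hj⟩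
    obtain hlt | rfl := (Fin.le_iff_val_le_val.2 (Nat.le_of_lt_succ hj)).lt_or_eq
    · simpa [hlt.ne] using hagree j hlt
    · simp

theorem completions_eq_biUnion_succ (i : Fin k) :
    completions S i v = ⋃ w ∈ S, completions S (i + 1) (Function.update v i w) := by
  ext u
  simp only [Set.mem_iUnion, exists_prop, mem_completions_succ_update]
  constructor
  · rintro ⟨hagree, hmem⟩
    exact ⟨u i, hmem i le_rfl, rfl, fun j hj => hagree j hj, fun j hj => hmem j hj.le⟩
  · rintro ⟨_, hw, rfl, hagree, hmem⟩
    refine ⟨fun j hj => hagree j hj, fun j hj => ?_⟩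
    obtain hlt | rfl := (Fin.le_iff_val_le_val.2 hj).lt_or_eq
    exacts [hmem j hlt, hw]

end Completions

namespace NFH

variable {α σ : Type} {k : ℕ} {A : NFH α σ k} {S : Set (List α)}

theorem satFrom_of_le {i : ℕ} {v : Fin k → List α} (hki : k ≤ i) :
    A.SatFrom S i v ↔ zipWord v ∈ A.aut.accepts := by
  rw [SatFrom, dif_neg hki.not_gt]

theorem satFrom_of_quant_eq_false {i : Fin k} {v : Fin k → List α} (hi : A.quant i = false) :
    A.SatFrom S i v ↔ ∀ w ∈ S, A.SatFrom S (i + 1) (Function.update v i w) := by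
  rw [SatFrom, dif_pos i.isLt, if_neg (by simp [hi])]

theorem satFrom_iff_forall_mem_completions {i : ℕ} {v : Fin k → List α}
    (hA : ∀ j : Fin k, i ≤ j → A.quant j = false) :
    A.SatFrom S i v ↔ ∀ u ∈ completions S i v, zipWord u ∈ A.aut.accepts := by
  obtain hki | hik := le_or_gt k i
  · simp only [satFrom_of_le hki, completions_of_le hki, Set.mem_singleton_iff, forall_eq]
  · have ih (w : List α) : A.SatFrom S (i + 1) (Function.update v ⟨i, hik⟩ w) ↔
        ∀ u ∈ completions S (i + 1) (Function.update v ⟨i, hik⟩ w), zipWord u ∈ A.aut.accepts :=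
      satFrom_iff_forall_mem_completions fun j hj => hA j (Nat.le_of_succ_le hj)
    rw [satFrom_of_quant_eq_false (i := ⟨i, hik⟩) (hA _ le_rfl),
      completions_eq_biUnion_succ ⟨i, hik⟩]
    simp only [ih, Set.mem_iUnion, exists_prop]
    exact ⟨fun hacc u ⟨w, hw, hu⟩ => hacc w hw u hu, fun hacc w hw u hu => hacc u ⟨w, hw, hu⟩⟩
termination_by k - i

theorem accepts_iff_forall_tuple (hA : ∀ j, A.quant j = false) :
    A.Accepts S ↔ ∀ u : Fin k → List α, (∀ j, u j ∈ S) → zipWord u ∈ A.aut.accepts := by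
  simp only [Accepts, satFrom_iff_forall_mem_completions fun j _ => hA j, mem_completions_zero]

end NFH

theorem forall_tuple_forall_comp_iff {ι β : Type*} {S : Set β} {P : (ι → β) → Prop} :
    (∀ u : ι → β, (∀ j, u j ∈ S) → ∀ ζ : ι → ι, P (u ∘ ζ)) ↔
      ∀ u : ι → β, (∀ j, u j ∈ S) → P u :=
  ⟨fun hP u hu => hP u hu id, fun hP u hu ζ => hP (u ∘ ζ) fun j => hu (ζ j)⟩

/-- If `A'` is a sequence-complete NFH_∀ such that, for every legal word `w`,
its underlying NFA accepts `w` iff the underlying NFA of the NFH_∀ `A` accepts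
every sequence of `w`, then `𝓛(A) = 𝓛(A')`. -/
theorem nfhA_seq_complete_same_hyperlanguage {α σ σ' : Type} {k : ℕ}
    (A : NFH α σ k) (A' : NFH α σ' k)
    (hA : ∀ i : Fin k, A.quant i = false)
    (hA' : ∀ i : Fin k, A'.quant i = false)
    (hsc : SeqComplete A')
    (h : ∀ v : Fin k → List α,
      zipWord v ∈ A'.aut.accepts ↔
        ∀ ζ : Fin k → Fin k, zipWord (v ∘ ζ) ∈ A.aut.accepts) :
    A.hyperLang = A'.hyperLang := by
  ext S
  refine and_congr_right fun _ => ?_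
  calc A.Accepts S
    _ ↔ ∀ u : Fin k → List α, (∀ j, u j ∈ S) → zipWord u ∈ A.aut.accepts :=
      NFH.accepts_iff_forall_tuple hA
    _ ↔ ∀ u : Fin k → List α, (∀ j, u j ∈ S) →
          ∀ ζ : Fin k → Fin k, zipWord (u ∘ ζ) ∈ A.aut.accepts :=
      forall_tuple_forall_comp_iff.symm
    _ ↔ ∀ u : Fin k → List α, (∀ j, u j ∈ S) → zipWord u ∈ A'.aut.accepts := by
      simp only [h]
    _ ↔ A'.Accepts S := (NFH.accepts_iff_forall_tuple hA').symm
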